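/- arXiv:math/9207203 — 3 statements merged into one kernel-verified Lean document; each statement's English description precedes it below -/
import Mathlib

section
/- Let κ > λ be uncountable cardinal numbers with λ regular. The following statements are equivalent: (1) the partially ordered set ([κ]^{<λ},⊂) of subsets of κ of cardinality less than λ has cofinality κ; (2) there is a free ideal J such that add(J,⊂) = λ, cof(J,⊂) = κ, and (J,⊂) has the irredundancy property. -/
/-!
For `(1) ⇒ (2)` the ideal is `J = [κ]^{<lam}` itself, whose additivity is `lam` by regularity.
If `C : κ → J` enumerates a cofinal family, then `{C α ∪ {α} : α < κ}` is cofinal, and a subset of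
it bounded by `B` injects into `B`, so it has fewer than `lam` elements (`burst_insert_le`). Hence
`bu J ≤ lam`; the inequality `add ≤ bu` holds in every free ideal (`add_le_bu`).

For `(2) ⇒ (1)`, let `Q` be cofinal in `J` with `burst Q = lam`, let `f : κ → Q` be injective, and
let `D` be cofinal in `J` of size `κ`, each `d ∈ D` lying below some `q d ∈ Q`. The sets
`{α | f α ≤ q d}` have fewer than `lam` elements, and they are cofinal in `[κ]^{<lam}` because the
image under `f` of a set of size less than `lam = add J` is bounded in `J` (`cof_small_le`).
Conversely `cof [κ]^{<lam} ≥ κ`, since a cofinal family covers `κ` by sets of size less than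
`lam < κ` (`le_cof_small`).
-/

open Cardinal

universe u v

/-- The additivity of a partially ordered set: the least cardinality of a subset
with no upper bound. -/
noncomputable def addP (P : Type u) [PartialOrder P] : Cardinal.{u} :=
  sInf { c : Cardinal.{u} | ∃ s : Set P, #↥s = c ∧ ¬ ∃ b : P, ∀ x ∈ s, x ≤ b }

/-- The cofinality of a partially ordered set: the least cardinality of a cofinal subset. -/
noncomputable def cofP (P : Type u) [PartialOrder P] : Cardinal.{u} :=
  sInf { c : Cardinal.{u} | ∃ s : Set P, #↥s = c ∧ ∀ x : P, ∃ y ∈ s, x ≤ y }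

/-- The bursting number: the smallest cardinal exceeding the cardinality of every
bounded subset. -/
noncomputable def burstP (P : Type u) [PartialOrder P] : Cardinal.{u} :=
  sInf { c : Cardinal.{u} | ∀ s : Set P, (∃ b : P, ∀ x ∈ s, x ≤ b) → #↥s < c }

/-- The principal bursting number: the minimum of the bursting numbers of the
cofinal subsets. -/
noncomputable def buP (P : Type u) [PartialOrder P] : Cardinal.{u} :=
  sInf { c : Cardinal.{u} | ∃ Q : Set P, (∀ x : P, ∃ y ∈ Q, x ≤ y) ∧ burstP ↥Q = c }

/-- A free ideal on `S`: a proper ideal of subsets of `S` containing every finite set. -/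
structure IsFreeIdeal {S : Type u} (J : Set (Set S)) : Prop where
  subset_mem : ∀ ⦃A B : Set S⦄, A ∈ J → B ⊆ A → B ∈ J
  union_mem : ∀ ⦃A B : Set S⦄, A ∈ J → B ∈ J → A ∪ B ∈ J
  finite_mem : ∀ A : Set S, A.Finite → A ∈ J
  proper : Set.univ ∉ J

section Poset

variable {P : Type u} [PartialOrder P]

theorem bounded_of_lt_addP {s : Set P} (h : #↥s < addP P) : ∃ b : P, ∀ x ∈ s, x ≤ b := by
  by_contra hb
  have h' : addP P ≤ #↥s := csInf_le' ⟨s, rfl, hb⟩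
  exact absurd h' (not_le.2 h)

theorem lt_burstP {s : Set P} (h : ∃ b : P, ∀ x ∈ s, x ≤ b) : #↥s < burstP P :=
  csInf_mem (s := { c : Cardinal.{u} | ∀ s : Set P, (∃ b : P, ∀ x ∈ s, x ≤ b) → #↥s < c })
    ⟨Order.succ #P, fun s _ => Order.lt_succ_of_le (mk_set_le s)⟩ s h

theorem cofP_le {s : Set P} (h : ∀ x : P, ∃ y ∈ s, x ≤ y) : cofP P ≤ #↥s :=
  csInf_le' ⟨s, rfl, h⟩

variable (P) in
theorem exists_cofP : ∃ s : Set P, #↥s = cofP P ∧ ∀ x : P, ∃ y ∈ s, x ≤ y :=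
  csInf_mem (s := { c : Cardinal.{u} | ∃ s : Set P, #↥s = c ∧ ∀ x : P, ∃ y ∈ s, x ≤ y })
    ⟨_, Set.univ, rfl, fun x => ⟨x, trivial, le_rfl⟩⟩

variable (P) in
theorem exists_buP : ∃ Q : Set P, (∀ x : P, ∃ y ∈ Q, x ≤ y) ∧ burstP ↥Q = buP P :=
  csInf_mem
    (s := { c : Cardinal.{u} | ∃ Q : Set P, (∀ x : P, ∃ y ∈ Q, x ≤ y) ∧ burstP ↥Q = c })
    ⟨_, Set.univ, fun x => ⟨x, trivial, le_rfl⟩, rfl⟩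

/-- In a poset without maximum, a cofinal subset `Q` is unbounded, so it has subsets of every
cardinality below `add P`; all of these are bounded in `P`, hence in `Q`. -/
theorem addP_le_buP (hmax : ¬ ∃ b : P, ∀ x, x ≤ b) : addP P ≤ buP P := by
  obtain ⟨Q, hQ, hb⟩ := exists_buP P
  rw [← hb]
  by_contra! hlt
  have hQadd : addP P ≤ #↥Q := by
    by_contra! h
    obtain ⟨b, hb⟩ := bounded_of_lt_addP h
    refine hmax ⟨b, fun x => ?_⟩
    obtain ⟨y, hy, hxy⟩ := hQ x
    exact hxy.trans (hb y hy)
  obtain ⟨T, hT⟩ := le_mk_iff_exists_set.1 (hlt.le.trans hQadd)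
  have hT' : #↥(Subtype.val '' T : Set P) < addP P := mk_image_le.trans_lt (hT ▸ hlt)
  obtain ⟨b, hb⟩ := bounded_of_lt_addP hT'
  obtain ⟨y, hy, hby⟩ := hQ b
  have : #↥T < burstP ↥Q :=
    lt_burstP ⟨⟨y, hy⟩, fun x hx => (hb x.1 ⟨x, hx, rfl⟩).trans hby⟩
  exact absurd hT this.ne

end Poset

theorem add_le_bu {S : Type u} {J : Set (Set S)} (hJ : IsFreeIdeal J) : addP ↥J ≤ buP ↥J := by
  refine addP_le_buP ?_
  rintro ⟨b, hb⟩
  refine hJ.proper ?_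
  have : b.1 = Set.univ := Set.eq_univ_of_forall fun x =>
    hb ⟨{x}, hJ.finite_mem _ (Set.finite_singleton x)⟩ rfl
  exact this ▸ b.2

/-- The ideal `[X]^{<lam}`. -/
abbrev smallSets (X : Type u) (lam : Cardinal.{u}) : Set (Set X) := {s | #↥s < lam}

section Small

variable {X : Type u} {lam : Cardinal.{u}}

theorem isFreeIdeal_small (hlam : ℵ₀ ≤ lam) (hX : lam ≤ #X) : IsFreeIdeal (smallSets X lam) where
  subset_mem _ _ hA hBA := (mk_le_mk_of_subset hBA).trans_lt hA
  union_mem A B hA hB := (mk_union_le A B).trans_lt (add_lt_of_lt hlam hA hB)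
  finite_mem _ hA := hA.lt_aleph0.trans_le hlam
  proper h := by
    have h' : #↥(Set.univ : Set X) < lam := h
    rw [mk_univ] at h'
    exact absurd hX (not_le.2 h')

theorem addP_small (hreg : lam.IsRegular) (hX : lam ≤ #X) : addP ↥(smallSets X lam) = lam := by
  have hne : lam ∈ { c : Cardinal.{u} | ∃ s : Set ↥(smallSets X lam), #↥s = c ∧
      ¬ ∃ b : ↥(smallSets X lam), ∀ x ∈ s, x ≤ b } := by
    -- the singletons of a set of size `lam` are unbounded
    obtain ⟨T, hT⟩ := le_mk_iff_exists_set.1 hX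
    have h1 (x : X) : ({x} : Set X) ∈ smallSets X lam := by
      simpa using one_lt_aleph0.trans_le hreg.aleph0_le
    let g : X → ↥(smallSets X lam) := fun x => ⟨{x}, h1 x⟩
    have hg : Function.Injective g := fun x y hxy => by
      simpa [g] using hxy
    refine ⟨g '' T, by rw [mk_image_eq hg, hT], ?_⟩
    rintro ⟨b, hb⟩
    have hTb : T ⊆ b.1 := fun x hx => hb (g x) ⟨x, hx, rfl⟩ rfl
    exact absurd b.2 (not_lt.2 (hT ▸ mk_le_mk_of_subset hTb))
  refine le_antisymm (csInf_le' hne) (le_csInf ⟨_, hne⟩ ?_)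
  rintro c ⟨s, rfl, hs⟩
  by_contra! hlt
  refine hs ⟨⟨⋃ x : ↥s, x.1.1, ?_⟩, fun x hx => Set.subset_iUnion (fun x : ↥s => x.1.1) ⟨x, hx⟩⟩
  exact (card_iUnion_lt_iff_forall_of_isRegular hreg hlt).2 fun x => x.1.2

theorem le_cof_small (hlam : ℵ₀ ≤ lam) (hX : lam < #X) : #X ≤ cofP ↥(smallSets X lam) := by
  obtain ⟨s, hs, hcof⟩ := exists_cofP ↥(smallSets X lam)
  rw [← hs]
  by_contra! hlt
  have hcover : (⋃ x : ↥s, x.1.1) = Set.univ := Set.eq_univ_of_forall fun x => by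
    obtain ⟨y, hy, hxy⟩ := hcof ⟨{x}, by simpa using one_lt_aleph0.trans_le hlam⟩
    exact Set.mem_iUnion.2 ⟨⟨y, hy⟩, hxy rfl⟩
  have h1 : #X ≤ #↥s * lam := by
    rw [← mk_univ, ← hcover]
    refine (mk_iUnion_le _).trans (mul_le_mul_right (ciSup_le' fun x => x.1.2.le) _)
  exact absurd h1 (not_le.2 (mul_lt_of_lt (hlam.trans hX.le) hlt hX))

/-- Adding the index `x` to the `x`-th member of a cofinal family makes every bounded subfamily
inject into its bound. -/
theorem burst_insert_le (hlam : ℵ₀ ≤ lam) (hcof : cofP ↥(smallSets X lam) = #X) :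
    buP ↥(smallSets X lam) ≤ lam := by
  obtain ⟨s, hs, hscof⟩ := exists_cofP ↥(smallSets X lam)
  obtain ⟨e⟩ := Cardinal.eq.1 (hs.trans hcof)
  have h1 (x : X) : insert x (e.symm x).1.1 ∈ smallSets X lam :=
    (mk_insert_le).trans_lt (add_lt_of_lt hlam (e.symm x).1.2 (one_lt_aleph0.trans_le hlam))
  let C : X → ↥(smallSets X lam) := fun x => ⟨insert x (e.symm x).1.1, h1 x⟩
  have hC : ∀ x : ↥(smallSets X lam), ∃ y ∈ Set.range C, x ≤ y := fun x => by
    obtain ⟨y, hy, hxy⟩ := hscof x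
    refine ⟨C (e ⟨y, hy⟩), ⟨_, rfl⟩, fun z hz => ?_⟩
    simpa [C] using Or.inr (hxy hz)
  refine le_trans (csInf_le' ⟨Set.range C, hC, rfl⟩) (csInf_le' ?_)
  rintro t ⟨b, hb⟩
  choose i hi using fun q : ↥(Set.range C) => q.2
  have hib (q : ↥t) : i q.1 ∈ b.1.1 := by
    refine hb q.1 q.2 ?_
    rw [← hi q.1]
    exact Set.mem_insert _ _
  refine (mk_le_of_injective (f := fun q : ↥t => (⟨i q.1, hib q⟩ : ↥b.1.1)) ?_).trans_lt b.1.2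
  intro q r hqr
  have : i q.1 = i r.1 := congrArg Subtype.val hqr
  exact Subtype.ext (Subtype.ext (by rw [← hi q.1, ← hi r.1, this]))

/-- The preimages under an injection `f : X → Q` of the principal initial segments of `Q` given by
a minimal cofinal family form a cofinal family in `[X]^{<lam}`. -/
theorem cof_small_le {P : Type u} [PartialOrder P] (hadd : addP P = lam) (hcof : cofP P = #X)
    (hbu : buP P = lam) : cofP ↥(smallSets X lam) ≤ #X := by
  obtain ⟨Q, hQ, hb⟩ := exists_buP P
  obtain ⟨D, hD, hDcof⟩ := exists_cofP P
  obtain ⟨f⟩ : #X ≤ #↥Q := hcof ▸ cofP_le hQ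
  choose q hqQ hq using hQ
  have hsmall (d : P) : {x : X | (f x).1 ≤ q d} ∈ smallSets X lam := by
    have h : #↥(f '' {x : X | (f x).1 ≤ q d}) < burstP ↥Q := by
      refine lt_burstP ⟨⟨q d, hqQ d⟩, ?_⟩
      rintro _ ⟨x, hx, rfl⟩
      exact hx
    rwa [mk_image_eq f.injective, hb, hbu] at h
  let A : P → ↥(smallSets X lam) := fun d => ⟨_, hsmall d⟩
  have hA : ∀ x : ↥(smallSets X lam), ∃ y ∈ A '' D, x ≤ y := fun x => by
    have hx : #↥((fun z => (f z).1) '' x.1) < addP P := mk_image_le.trans_lt (hadd ▸ x.2)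
    obtain ⟨b, hb⟩ := bounded_of_lt_addP hx
    obtain ⟨d, hd, hbd⟩ := hDcof b
    exact ⟨A d, ⟨d, hd, rfl⟩, fun z hz => (hb _ ⟨z, hz, rfl⟩).trans (hbd.trans (hq d))⟩
  exact (cofP_le hA).trans (mk_image_le.trans (hD.trans hcof).le)

end Small

/-- Lemma 2.5: for uncountable cardinals `κ > lam` with `lam` regular, the ideal
`[κ]^{<lam}` has cofinality `κ` if and only if there is a free ideal `J` with
additivity `lam`, cofinality `κ`, and the irredundancy property (`bu = add`). -/
theorem stmt1 (κ lam : Cardinal.{u}) (hκ : ℵ₀ < κ) (hlam : ℵ₀ < lam)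
    (hlt : lam < κ) (hreg : lam.IsRegular) :
    cofP ↥{s : Set (Quotient.out κ) | #↥s < lam} = κ ↔
      ∃ (S : Type u) (J : Set (Set S)), IsFreeIdeal J ∧
        addP ↥J = lam ∧ cofP ↥J = κ ∧ buP ↥J = addP ↥J := by
  have hX : #(Quotient.out κ) = κ := mk_out κ
  constructor
  · intro h
    have hJ := isFreeIdeal_small hlam.le (hX.symm ▸ hlt.le : lam ≤ #(Quotient.out κ))
    have hadd := addP_small hreg (hX.symm ▸ hlt.le : lam ≤ #(Quotient.out κ))
    refine ⟨Quotient.out κ, smallSets _ lam, hJ, hadd, h, le_antisymm ?_ (add_le_bu hJ)⟩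
    rw [hadd]
    exact burst_insert_le hlam.le (h.trans hX.symm)
  · rintro ⟨S, J, -, hadd, hcof, hbu⟩
    refine le_antisymm ?_ ?_
    · exact (cof_small_le hadd (hcof.trans hX.symm) (hbu.trans hadd)).trans hX.le
    · exact hX.symm.le.trans (le_cof_small hlam.le (hX.symm ▸ hlt))
end

section
/- The family ℬ = {B_{x,f} : x ∈ 2^ω, f ∈ ω^ω strictly increasing} of meager subsets of Cantor space satisfies: (1) ℬ is cofinal in the ideal of meager subsets of 2^ω (every meager set is contained in a member of ℬ); (2) ℬ has a coherent decomposition, witnessed by the nowhere dense sets Bⁿ_{x,f}: each B_{x,f} is the increasing union ⋃ₙ Bⁿ_{x,f}, and B_{x,f} ⊊ B_{y,g} implies that Bⁿ_{x,f} ⊆ Bⁿ_{y,g} for all sufficiently large n; (3) the assignment B_{x,f} ↦ f is order preserving into (ω^ω,≪): B_{x,f} ⊊ B_{y,g} implies f ≪ g. -/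
/-!
The sets `BnSet x f n` are closed, and a cylinder never fits inside one because a point can be made
to agree with `x` on a block beyond the cylinder; so they are nowhere dense.

Cofinality. For a dense open `U` and a length `N` there is a finite pattern on some interval
`[N, M)` that forces membership in `U` whatever the first `N` bits are
(`exists_forcing_pattern`): the finitely many translates of `U` by changes of the first `N` bits
are dense open, so they have a common point, and the pattern is read off from it. Concatenating such
patterns for a decreasing sequence of dense open sets whose intersection misses a given meagre set
produces `x` and `f`.

Order. The inclusion `BSet x f ⊆ BSet y g` forces every late `g`-block to contain an
`f`-block, with index `k n` say, on which `x` and `y` agree (`exists_block_of_subset`). Disjointness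
of blocks gives `k n < k (n + 1)`. If `k (n + 1) = k n + 1` for all late `n`, the two block
partitions eventually coincide up to a shift and the two sets are equal. Hence if the inclusion is
proper, `k` skips an index infinitely often and `k n - n → ∞` (`exists_block_of_ssubset`). Both the
coherence of the decompositions and `f ≪ g` follow.
-/

open Cardinal

universe u v

/-- `BSet x f` : the set of `z` in Cantor space such that for all but finitely many `n`,
the restriction of `z` to `[f n, f (n+1))` differs from that of `x`. -/
def BSet (x : ℕ → Bool) (f : ℕ → ℕ) : Set (ℕ → Bool) :=
  { z | ∃ N : ℕ, ∀ n ≥ N, ∃ i : ℕ, f n ≤ i ∧ i < f (n + 1) ∧ z i ≠ x i }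

/-- `BnSet x f n` : the set of `z` in Cantor space such that for every `k ≥ n`, the
restriction of `z` to `[f k, f (k+1))` differs from that of `x`. -/
def BnSet (x : ℕ → Bool) (f : ℕ → ℕ) (n : ℕ) : Set (ℕ → Bool) :=
  { z | ∀ k ≥ n, ∃ i : ℕ, f k ≤ i ∧ i < f (k + 1) ∧ z i ≠ x i }

/-- `f ≪ g` : `g` eventually dominates `f`, i.e. `g n - f n → ∞`. -/
def evDominates (f g : ℕ → ℕ) : Prop :=
  Filter.Tendsto (fun n => (g n : ℤ) - (f n : ℤ)) Filter.atTop Filter.atTop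

/-! ### The sets `BnSet x f n` are nowhere dense -/

/-- Coordinates below a finite bound determine membership in an open set near a given point. -/
lemma exists_length_of_isOpen {U : Set (ℕ → Bool)} (hU : IsOpen U) {w : ℕ → Bool} (hw : w ∈ U) :
    ∃ M : ℕ, ∀ z : ℕ → Bool, (∀ i < M, z i = w i) → z ∈ U := by
  obtain ⟨I, u, hu, hsub⟩ := isOpen_pi_iff.1 hU w hw
  refine ⟨I.sup id + 1, fun z hz => hsub fun i hi => ?_⟩
  have hle : i ≤ I.sup id := Finset.le_sup (f := id) hi
  rw [hz i (by omega)]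
  exact (hu i hi).2

/-- Two blocks of a strictly increasing sequence that share a point are the same. -/
lemma block_unique {f : ℕ → ℕ} (hf : StrictMono f) {m n i : ℕ} (h1 : f m ≤ i) (h2 : i < f (m + 1))
    (h3 : f n ≤ i) (h4 : i < f (n + 1)) : m = n := by
  have a := hf.lt_iff_lt.1 (h1.trans_lt h4)
  have b := hf.lt_iff_lt.1 (h3.trans_lt h2)
  omega

lemma isNowhereDense_BnSet (x : ℕ → Bool) {f : ℕ → ℕ} (hf : StrictMono f) (n : ℕ) :
    IsNowhereDense (BnSet x f n) := by
  have hcl : IsClosed (BnSet x f n) := by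
    have : BnSet x f n = ⋂ k ≥ n, ⋃ i ∈ Finset.Ico (f k) (f (k + 1)), {z | z i ≠ x i} := by
      ext z
      simp [BnSet, and_assoc]
    rw [this]
    refine isClosed_iInter fun k => isClosed_iInter fun _ => isClosed_biUnion_finset fun i _ => ?_
    have hi : Continuous fun z : ℕ → Bool => z i := continuous_apply i
    exact (isClosed_discrete {b : Bool | b ≠ x i}).preimage hi
  rw [hcl.isNowhereDense_iff, Set.eq_empty_iff_forall_notMem]
  intro z hz
  obtain ⟨M, hM⟩ := exists_length_of_isOpen isOpen_interior hz
  have hw := interior_subset (hM (fun i => if i < M then z i else x i) fun i hi => by simp [hi])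
  obtain ⟨i, h1, -, h3⟩ := hw (max n M) (le_max_left _ _)
  have h4 := hf.le_apply (x := max n M)
  have h5 : ¬ i < M := by omega
  simp [h5] at h3

lemma BSet_eq_iUnion (x : ℕ → Bool) (f : ℕ → ℕ) : BSet x f = ⋃ n, BnSet x f n := by
  ext z
  simp [BSet, BnSet]

/-! ### Cofinality in the meagre ideal -/

/-- Coordinatewise exclusive or with `t`, as a self-homeomorphism of Cantor space. -/
def xorHomeo (t : ℕ → Bool) : (ℕ → Bool) ≃ₜ (ℕ → Bool) where
  toFun z i := xor (z i) (t i)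
  invFun z i := xor (z i) (t i)
  left_inv z := by ext i; simp
  right_inv z := by ext i; simp
  continuous_toFun := continuous_pi fun i =>
    (continuous_of_discreteTopology (f := fun b => xor b (t i))).comp (continuous_apply i)
  continuous_invFun := continuous_pi fun i =>
    (continuous_of_discreteTopology (f := fun b => xor b (t i))).comp (continuous_apply i)

/-- Some pattern on an interval `[N, M)` forces membership in a given dense open set, regardless
of the coordinates below `N`. -/
lemma exists_forcing_pattern {U : Set (ℕ → Bool)} (hU : IsOpen U) (hd : Dense U) (N : ℕ) :
    ∃ M > N, ∃ s : ℕ → Bool, ∀ z : ℕ → Bool, (∀ i, N ≤ i → i < M → z i = s i) → z ∈ U := by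
  let e : (Fin N → Bool) → (ℕ → Bool) := fun t i => if h : i < N then t ⟨i, h⟩ else false
  have hdense : Dense (⋂ t, xorHomeo (e t) ⁻¹' U) :=
    dense_iInter_of_isOpen (fun t => hU.preimage (xorHomeo (e t)).continuous)
      (fun t => hd.preimage (xorHomeo (e t)).isOpenMap)
  obtain ⟨s, hs⟩ := hdense.nonempty
  rw [Set.mem_iInter] at hs
  choose M hM using fun t => exists_length_of_isOpen hU (hs t)
  refine ⟨max (N + 1) (Finset.univ.sup M), by omega, s, fun z hz => ?_⟩
  -- the change of the first `N` bits that turns `s` into `z` there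
  let t : Fin N → Bool := fun j => xor (s j) (z j)
  refine hM t z fun i hi => ?_
  have hle : M t ≤ Finset.univ.sup M := Finset.le_sup (Finset.mem_univ t)
  by_cases h : i < N
  · simp [xorHomeo, e, t, h]
  · simpa [xorHomeo, e, h] using hz i (by omega) (by omega)

lemma exists_decreasing_dense_open {X : Set (ℕ → Bool)} (hX : IsMeagre X) :
    ∃ V : ℕ → Set (ℕ → Bool), (∀ n, IsOpen (V n)) ∧ (∀ n, Dense (V n)) ∧
      ∀ z ∈ X, ∃ N, ∀ n ≥ N, z ∉ V n := by
  obtain ⟨S, hSo, hSd, hSc, hSX⟩ := mem_residual_iff.1 hX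
  obtain ⟨U, hU⟩ := (hSc.insert Set.univ).exists_eq_range (Set.insert_nonempty _ _)
  have hUS : ∀ n, IsOpen (U n) ∧ Dense (U n) := by
    intro n
    have : U n ∈ insert Set.univ S := hU ▸ Set.mem_range_self n
    rcases this with h | h
    · rw [h]; exact ⟨isOpen_univ, dense_univ⟩
    · exact ⟨hSo _ h, hSd _ h⟩
  refine ⟨fun n => ⋂ k : Fin (n + 1), U k, fun n => isOpen_iInter_of_finite fun k => (hUS k).1,
    fun n => dense_iInter_of_isOpen (fun k => (hUS k).1) (fun k => (hUS k).2), fun z hz => ?_⟩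
  have hz' : z ∉ ⋂₀ S := fun h => hSX h hz
  simp only [Set.mem_sInter, not_forall] at hz'
  obtain ⟨T, hT, hzT⟩ := hz'
  obtain ⟨N, rfl⟩ : T ∈ Set.range U := hU ▸ Set.mem_insert_of_mem _ hT
  exact ⟨N, fun n hn h => hzT (Set.mem_iInter.1 h ⟨N, by omega⟩)⟩

lemma exists_BSet_superset {X : Set (ℕ → Bool)} (hX : IsMeagre X) :
    ∃ (x : ℕ → Bool) (f : ℕ → ℕ), StrictMono f ∧ X ⊆ BSet x f := by
  classical
  obtain ⟨V, hVo, hVd, hV⟩ := exists_decreasing_dense_open hX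
  choose M hM s hs using fun n N => exists_forcing_pattern (hVo n) (hVd n) N
  let f : ℕ → ℕ := fun n => Nat.rec (motive := fun _ => ℕ) 0 (fun n a => M n a) n
  have hf : StrictMono f := strictMono_nat_of_lt_succ fun n => hM n (f n)
  let x : ℕ → Bool := fun i =>
    if h : ∃ n, f n ≤ i ∧ i < f (n + 1) then s h.choose (f h.choose) i else false
  have hx : ∀ n i, f n ≤ i → i < f (n + 1) → x i = s n (f n) i := by
    intro n i h1 h2
    have h : ∃ n, f n ≤ i ∧ i < f (n + 1) := ⟨n, h1, h2⟩
    have hn : h.choose = n := block_unique hf h.choose_spec.1 h.choose_spec.2 h1 h2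
    change (if h : ∃ n, f n ≤ i ∧ i < f (n + 1) then s h.choose (f h.choose) i else false) = _
    rw [dif_pos h, hn]
  refine ⟨x, f, hf, fun z hz => ?_⟩
  obtain ⟨N, hN⟩ := hV z hz
  refine ⟨N, fun n hn => ?_⟩
  by_contra! hc
  exact hN n hn (hs n (f n) z fun i h1 h2 => (hc i h1 h2).trans (hx n i h1 h2))

/-! ### Consequences of inclusion -/

/-- If `BSet x f ⊆ BSet y g`, every late block of `g` contains a block of `f` on which `x` and `y`
agree. Otherwise there are infinitely many bad `g`-blocks, hence infinitely many with indices of one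
parity; the point equal to `y` on those and to the complement of `x` elsewhere lies in `BSet x f`
but not in `BSet y g`. -/
lemma exists_block_of_subset {x y : ℕ → Bool} {f g : ℕ → ℕ} (hf : StrictMono f)
    (hg : StrictMono g) (h : BSet x f ⊆ BSet y g) :
    ∃ N, ∀ n ≥ N, ∃ k, g n ≤ f k ∧ f (k + 1) ≤ g (n + 1) ∧
      ∀ i, f k ≤ i → i < f (k + 1) → x i = y i := by
  classical
  by_contra hcon
  let bad : ℕ → Prop := fun n => ¬ ∃ k, g n ≤ f k ∧ f (k + 1) ≤ g (n + 1) ∧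
      ∀ i, f k ≤ i → i < f (k + 1) → x i = y i
  have hbad : ∃ᶠ n in Filter.atTop, bad n := by
    rw [Filter.frequently_atTop]
    intro N
    by_contra! hc
    exact hcon ⟨N, fun n hn => not_not.1 (hc n hn)⟩
  obtain ⟨p, hp⟩ : ∃ p, ∃ᶠ n in Filter.atTop, bad n ∧ n % 2 = p := by
    have h2 : ∃ᶠ n in Filter.atTop, (bad n ∧ n % 2 = 0) ∨ (bad n ∧ n % 2 = 1) :=
      hbad.mono fun n hn => by
        rcases Nat.mod_two_eq_zero_or_one n with h | h
        · exact Or.inl ⟨hn, h⟩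
        · exact Or.inr ⟨hn, h⟩
    rcases Filter.frequently_or_distrib.1 h2 with h | h
    · exact ⟨0, h⟩
    · exact ⟨1, h⟩
  let P : ℕ → Prop := fun i => ∃ n, (bad n ∧ n % 2 = p) ∧ g n ≤ i ∧ i < g (n + 1)
  let z : ℕ → Bool := fun i => if P i then y i else !x i
  have hzf : z ∈ BSet x f := by
    refine ⟨0, fun k _ => ?_⟩
    by_contra! hc
    have hP : ∀ i, f k ≤ i → i < f (k + 1) → P i := by
      intro i h1 h2
      by_contra hPi
      have := hc i h1 h2
      simp [z, hPi] at this
    have hxy : ∀ i, f k ≤ i → i < f (k + 1) → x i = y i := by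
      intro i h1 h2
      have := hc i h1 h2
      simp only [z, if_pos (hP i h1 h2)] at this
      exact this.symm
    obtain ⟨n, ⟨hb, hn⟩, h1, h2⟩ := hP (f k) le_rfl (hf (Nat.lt_succ_self k))
    refine hb ⟨k, h1, ?_, hxy⟩
    by_contra! hlt
    -- the block of `f` runs on into the next block of `g`, whose index has the other parity
    obtain ⟨m, ⟨-, hm⟩, h3, h4⟩ := hP (g (n + 1)) h2.le hlt
    have := block_unique hg h3 h4 le_rfl (hg (Nat.lt_succ_self (n + 1)))
    omega
  obtain ⟨N, hN⟩ := h hzf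
  obtain ⟨n, hn, hbn⟩ := Filter.frequently_atTop.1 hp N
  obtain ⟨i, h1, h2, h3⟩ := hN n hn
  have hPi : P i := ⟨n, hbn, h1, h2⟩
  simp [z, hPi] at h3

/-- If `BSet x f ⊂ BSet y g`, the `f`-block found inside the `n`-th `g`-block has an index exceeding
`n` by an amount that tends to infinity with `n`. -/
lemma exists_block_of_ssubset {x y : ℕ → Bool} {f g : ℕ → ℕ} (hf : StrictMono f)
    (hg : StrictMono g) (h : BSet x f ⊂ BSet y g) (c : ℕ) :
    ∃ N, ∀ n ≥ N, ∃ k, n + c ≤ k ∧ g n ≤ f k ∧ f (k + 1) ≤ g (n + 1) ∧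
      ∀ i, f k ≤ i → i < f (k + 1) → x i = y i := by
  obtain ⟨N, hN⟩ := exists_block_of_subset hf hg h.subset
  choose! k hk1 hk2 hk3 using hN
  have hlt : ∀ n ≥ N, k n + 1 ≤ k (n + 1) := fun n hn =>
    hf.le_iff_le.1 ((hk2 n hn).trans (hk1 (n + 1) (by omega)))
  have hjump : ∀ N' ≥ N, ∃ n ≥ N', k n + 2 ≤ k (n + 1) := by
    intro N' hN'
    by_contra! hc
    have hstep : ∀ n ≥ N', k (n + 1) = k n + 1 := fun n hn => by
      have := hlt n (by omega)
      have := hc n hn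
      omega
    have hshift : ∀ a ≥ N', ∀ t, k (a + t) = k a + t := by
      intro a ha t
      induction t with
      | zero => rfl
      | succ t ih => rw [← add_assoc, hstep _ (by omega), ih, add_assoc]
    have hg_eq : ∀ n ≥ N' + 1, g n = f (k n) := by
      intro n hn
      obtain ⟨m, rfl⟩ : ∃ m, n = m + 1 := ⟨n - 1, by omega⟩
      refine le_antisymm (hk1 _ (by omega)) ?_
      rw [hstep m (by omega)]
      exact hk2 m (by omega)
    refine h.not_subset ?_
    rintro z ⟨L, hL⟩
    let a := max L (N' + 1)
    have ha1 : L ≤ a := le_max_left _ _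
    have ha2 : N' + 1 ≤ a := le_max_right _ _
    refine ⟨k a, fun j hj => ?_⟩
    obtain ⟨t, rfl⟩ := Nat.exists_eq_add_of_le hj
    obtain ⟨i, h1, h2, h3⟩ := hL (a + t) (by omega)
    rw [hg_eq _ (by omega)] at h1
    rw [hg_eq _ (by omega), hstep _ (by omega)] at h2
    have hxy := hk3 (a + t) (by omega) i h1 h2
    rw [hshift a (by omega)] at h1 h2
    exact ⟨i, h1, h2, by rwa [hxy]⟩
  -- each jump raises `k n - n` by one, starting from at least `-N`
  have key : ∀ c, ∃ n₀ ≥ N, ∀ n ≥ n₀, n + c ≤ k n + N := by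
    intro c
    induction c with
    | zero =>
      refine ⟨N, le_rfl, fun n hn => ?_⟩
      induction n, hn using Nat.le_induction with
      | base => omega
      | succ n hn ih => have := hlt n hn; omega
    | succ c ih =>
      obtain ⟨n₀, h0, hn₀⟩ := ih
      obtain ⟨m, hm, hj⟩ := hjump n₀ h0
      refine ⟨m + 1, by omega, fun n hn => ?_⟩
      induction n, hn using Nat.le_induction with
      | base => have := hn₀ m hm; omega
      | succ n hn ih => have := hlt n (by omega); omega
  obtain ⟨n₀, h0, hn₀⟩ := key (c + N)
  refine ⟨n₀, fun n hn => ⟨k n, ?_, hk1 n (by omega), hk2 n (by omega), hk3 n (by omega)⟩⟩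
  have := hn₀ n hn
  omega

/-- Theorem 3.11: the family of the meager sets `B_{x,f}` is cofinal in the meager ideal
of Cantor space, has a coherent decomposition witnessed by the nowhere dense sets
`Bⁿ_{x,f}`, and `B_{x,f} ↦ f` is order preserving into `(ω^ω, ≪)`. -/
theorem stmt10 :
    (∀ X : Set (ℕ → Bool), IsMeagre X →
        ∃ (x : ℕ → Bool) (f : ℕ → ℕ), StrictMono f ∧ X ⊆ BSet x f) ∧
    (∀ (x : ℕ → Bool) (f : ℕ → ℕ), StrictMono f → IsMeagre (BSet x f)) ∧
    (∀ (x : ℕ → Bool) (f : ℕ → ℕ), StrictMono f →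
        (∀ n : ℕ, IsNowhereDense (BnSet x f n)) ∧
        (∀ n : ℕ, BnSet x f n ⊆ BnSet x f (n + 1)) ∧
        BSet x f = ⋃ n, BnSet x f n) ∧
    (∀ (x y : ℕ → Bool) (f g : ℕ → ℕ), StrictMono f → StrictMono g →
        BSet x f ⊂ BSet y g →
        (∃ m : ℕ, ∀ n ≥ m, BnSet x f n ⊆ BnSet y g n) ∧ evDominates f g) := by
  refine ⟨fun X hX => exists_BSet_superset hX, fun x f hf => ?_, fun x f hf =>
    ⟨isNowhereDense_BnSet x hf, fun n z hz k hk => hz k (by omega), BSet_eq_iUnion x f⟩,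
    fun x y f g hf hg h => ⟨?_, ?_⟩⟩
  · rw [BSet_eq_iUnion]
    exact isMeagre_iUnion fun n => (isNowhereDense_BnSet x hf n).isMeagre
  · obtain ⟨N, hN⟩ := exists_block_of_ssubset hf hg h 0
    refine ⟨N, fun n hn z hz m hm => ?_⟩
    obtain ⟨k, hk, h1, h2, h3⟩ := hN m (by omega)
    obtain ⟨i, hi1, hi2, hi3⟩ := hz k (by omega)
    exact ⟨i, by omega, by omega, by rwa [← h3 i hi1 hi2]⟩
  · refine Filter.tendsto_atTop.2 fun b => ?_
    obtain ⟨N, hN⟩ := exists_block_of_ssubset hf hg h b.toNat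
    refine Filter.eventually_atTop.2 ⟨N + 1, fun n hn => ?_⟩
    obtain ⟨m, rfl⟩ : ∃ m, n = m + 1 := ⟨n - 1, by omega⟩
    obtain ⟨k, hk, -, h2, -⟩ := hN m (by omega)
    -- a strictly increasing sequence grows at least as fast as its index
    have h4 : f (m + 1) + b.toNat ≤ f (m + 1 + b.toNat) := by
      have := hf.add_le_nat b.toNat (m + 1)
      rw [add_comm (m + 1)]
      omega
    have h5 : f (m + 1 + b.toNat) ≤ f (k + 1) := hf.monotone (by omega)
    have h6 := Int.self_le_toNat b
    omega
end

section
/- Let J be a free ideal on a set S whose σ-completion ⟨J⟩ is a proper ideal, and let 𝒜 be a cofinal subfamily of ⟨J⟩ such that: (1) TWO has a winning k-tactic in MG(𝒜,J); (2) there are functions Φ₁ : ⟨J⟩ → J and Φ₂ : ⟨J⟩ → 𝒜 such that (a) A ⊊ Φ₂(A) for each A ∈ ⟨J⟩, and (b) Φ₂(A) ⊊ Φ₂(B) whenever A ∪ Φ₁(A) ⊆ B ∈ ⟨J⟩. Then TWO has a winning 2-tactic in SMG(J). -/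
/-!
TWO simulates a play of `MG(𝒜,J)` in which every move `B` of ONE in `SMG(J)` is expanded to a block
of `k` moves `Φ₂ B₀ ⊊ Φ₂ B₁ ⊊ ⋯ ⊊ Φ₂ B_{k-1}`, where `B₀ = B` and `B_{i+1} = B_i ∪ Φ₁ B_i`.
Each `B_i` is `B` together with a set `fill Φ₁ B i ∈ J`, so TWO can include `fill Φ₁ B k` in the
answer to `B`; the rules of `SMG(J)` then force ONE's next move `C` to contain `B_k`, whence
`Φ₂ B_{k-1} ⊊ Φ₂ C` and the concatenated blocks form a legal play of `MG(𝒜,J)`.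

A window of `k` consecutive moves of that play meets at most two consecutive blocks, so the `k`
answers of the given `k`-tactic inside the block of `C` depend only on the pair `(B, C)`. Their
union, together with `fill Φ₁ C k`, is the answer of the 2-tactic `pairAnswer`. As `B ⊆ Φ₂ B`, winning
the simulated play covers all of ONE's moves. Since a 2-tactic must also answer pairs which do not
occur in plays following it, answers of the `k`-tactic lying outside `J` are replaced by `∅`.
-/

open Cardinal

universe u v

/-- The σ-completion `⟨J⟩` of an ideal `J`: the closure of `J` under countable
unions and subsets. -/
def sigmaCompletion {S : Type u} (J : Set (Set S)) : Set (Set S) :=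
  { A | ∃ f : ℕ → Set S, (∀ n, f n ∈ J) ∧ A ⊆ ⋃ n, f n }

/-- The `min (n+1) k` most recent moves `[O (n+1-m), …, O n]` of the sequence `O`
of moves of player ONE (innings indexed from `0`). -/
def window {α : Type*} (k : ℕ) (O : ℕ → α) (n : ℕ) : List α :=
  (List.range (min (n + 1) k)).map fun i => O (n + 1 - min (n + 1) k + i)

/-- TWO has a winning `k`-tactic in the game `MG(𝒜,J)`: there is a function `Υ` mapping
each nonempty `⊊`-increasing tuple of at most `k` sets from `𝒜` to a set in `J`, such that
for every play in which ONE plays a `⊊`-increasing sequence from `𝒜` and TWO responds to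
the most recent `min(n,k)` moves using `Υ`, TWO covers the union of ONE's moves. -/
def TwoWinsMG {S : Type*} (J 𝒜 : Set (Set S)) (k : ℕ) : Prop :=
  ∃ Υ : List (Set S) → Set S,
    (∀ l : List (Set S), l ≠ [] → l.length ≤ k → (∀ A ∈ l, A ∈ 𝒜) →
        l.Chain' (· ⊂ ·) → Υ l ∈ J) ∧
    ∀ O : ℕ → Set S, (∀ n, O n ∈ 𝒜) → (∀ n, O n ⊂ O (n + 1)) →
      (⋃ n, O n) ⊆ ⋃ n, Υ (window k O n)

/-- TWO has a winning `k`-tactic in the strongly monotonic game `SMG(J)`, where ONE's moves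
come from `Jbig` (the σ-completion of `J`) and TWO's from `J`, subject to the rule
`O n ∪ T n ⊆ O (n+1)`; TWO wins when `⋃ O n = ⋃ T n`. -/
def TwoWinsSMG {S : Type*} (J Jbig : Set (Set S)) (k : ℕ) : Prop :=
  ∃ Υ : List (Set S) → Set S,
    (∀ l : List (Set S), l ≠ [] → l.length ≤ k → (∀ A ∈ l, A ∈ Jbig) →
        l.Chain' (· ⊆ ·) → Υ l ∈ J) ∧
    ∀ O : ℕ → Set S, (∀ n, O n ∈ Jbig) →
      (∀ n, O n ∪ Υ (window k O n) ⊆ O (n + 1)) →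
      (⋃ n, O n) = ⋃ n, Υ (window k O n)

/-- The set added to `B` by `i` iterations of `X ↦ X ∪ Φ₁ X`. -/
def fill {S : Type u} (Φ₁ : Set S → Set S) (B : Set S) : ℕ → Set S
  | 0 => ∅
  | i + 1 => fill Φ₁ B i ∪ Φ₁ (B ∪ fill Φ₁ B i)

/-- The sets `B_i` (`i < k`) for `B = O 0, O 1, …`, concatenated into one sequence. -/
def expand {S : Type u} (Φ₁ : Set S → Set S) (k : ℕ) (O : ℕ → Set S) (m : ℕ) : Set S :=
  O (m / k) ∪ fill Φ₁ (O (m / k)) (m % k)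

open Classical in
/-- The 2-tactic built from a `k`-tactic `Υ`. The list `l` of the one or two latest moves of ONE is
expanded into blocks, and `Υ` is applied to the windows ending in the last block. -/
noncomputable def pairAnswer {S : Type u} (J : Set (Set S)) (Φ₁ Φ₂ : Set S → Set S) (k : ℕ)
    (Υ : List (Set S) → Set S) (l : List (Set S)) : Set S :=
  fill Φ₁ (l.getLastD ∅) k ∪ ⋃ i ∈ Finset.range k,
    let w := window k (fun m => Φ₂ (expand Φ₁ k (fun j => l.getD j ∅) m)) ((l.length - 1) * k + i)
    if Υ w ∈ J then Υ w else ∅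

theorem IsFreeIdeal.biUnion_mem {S : Type u} {J : Set (Set S)} (hJ : IsFreeIdeal J)
    (f : ℕ → Set S) (hf : ∀ i, f i ∈ J) (s : Finset ℕ) : (⋃ i ∈ s, f i) ∈ J := by
  induction s using Finset.induction_on with
  | empty => simpa using hJ.finite_mem ∅ Set.finite_empty
  | insert a s _ ih =>
    rw [Finset.set_biUnion_insert]
    exact hJ.union_mem (hf a) ih

theorem sigmaCompletion_union_mem {S : Type u} {J : Set (Set S)} {A B : Set S}
    (hA : A ∈ sigmaCompletion J) (hB : B ∈ J) : A ∪ B ∈ sigmaCompletion J := by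
  obtain ⟨f, hf, hAf⟩ := hA
  refine ⟨fun n => Nat.casesOn n B f, fun n => by cases n <;> simp [hB, hf], ?_⟩
  rintro x (hx | hx)
  · obtain ⟨n, hn⟩ := Set.mem_iUnion.1 (hAf hx)
    exact Set.mem_iUnion.2 ⟨n + 1, hn⟩
  · exact Set.mem_iUnion.2 ⟨0, hx⟩

theorem fill_mem {S : Type u} {J : Set (Set S)} (hJ : IsFreeIdeal J) {Φ₁ : Set S → Set S}
    (hΦ₁ : ∀ A ∈ sigmaCompletion J, Φ₁ A ∈ J) {B : Set S} (hB : B ∈ sigmaCompletion J) (i : ℕ) :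
    fill Φ₁ B i ∈ J := by
  induction i with
  | zero => exact hJ.finite_mem ∅ Set.finite_empty
  | succ i ih =>
    exact hJ.union_mem ih (hΦ₁ _ (sigmaCompletion_union_mem hB ih))

/-- The only nontrivial case is the passage between blocks, which is where `h` enters. -/
theorem expand_step {S : Type u} {Φ₁ : Set S → Set S} {k : ℕ} (hk : 1 ≤ k) {O : ℕ → Set S}
    (h : ∀ n, O n ∪ fill Φ₁ (O n) k ⊆ O (n + 1)) (m : ℕ) :
    expand Φ₁ k O m ∪ Φ₁ (expand Φ₁ k O m) ⊆ expand Φ₁ k O (m + 1) := by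
  have key : expand Φ₁ k O m ∪ Φ₁ (expand Φ₁ k O m)
      = O (m / k) ∪ fill Φ₁ (O (m / k)) (m % k + 1) := by
    simp only [expand, fill, Set.union_assoc]
  rw [key]
  have hlt : m % k < k := Nat.mod_lt _ hk
  have hm := Nat.div_add_mod m k
  by_cases hc : m % k + 1 = k
  · have e : m + 1 = k * (m / k + 1) := by rw [Nat.mul_add]; omega
    have e1 : (m + 1) / k = m / k + 1 := by rw [e, Nat.mul_div_cancel_left _ hk]
    rw [hc, expand, e1]
    exact (h _).trans Set.subset_union_left
  · have hlt' : m % k + 1 < k := by omega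
    have e : m + 1 = m % k + 1 + k * (m / k) := by omega
    have e1 : (m + 1) / k = m / k := by
      conv_lhs => rw [e]
      rw [Nat.add_mul_div_left _ _ hk, Nat.div_eq_of_lt hlt', zero_add]
    have e2 : (m + 1) % k = m % k + 1 := by
      conv_lhs => rw [e]
      rw [Nat.add_mul_mod_self_left, Nat.mod_eq_of_lt hlt']
    rw [expand, e1, e2]

theorem window_congr {α : Type*} {k m m' : ℕ} {O O' : ℕ → α}
    (hmin : min (m + 1) k = min (m' + 1) k)
    (h : ∀ i < min (m + 1) k,
      O (m + 1 - min (m + 1) k + i) = O' (m' + 1 - min (m' + 1) k + i)) :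
    window k O m = window k O' m' := by
  unfold window
  rw [← hmin] at h ⊢
  exact List.map_congr_left fun i hi => h i (List.mem_range.1 hi)

/-- Answers of the `k`-tactic to a strictly increasing play are legal. -/
theorem window_legal {S : Type u} {J 𝒜 : Set (Set S)} {k : ℕ} (hk : 1 ≤ k)
    {Υ : List (Set S) → Set S}
    (hΥ : ∀ l : List (Set S), l ≠ [] → l.length ≤ k → (∀ A ∈ l, A ∈ 𝒜) →
        l.Chain' (· ⊂ ·) → Υ l ∈ J)
    {G : ℕ → Set S} (hG : ∀ n, G n ∈ 𝒜) (hG' : ∀ n, G n ⊂ G (n + 1)) (m : ℕ) :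
    Υ (window k G m) ∈ J := by
  have hmono : StrictMono G := strictMono_nat_of_lt_succ hG'
  refine hΥ _ ?_ ?_ ?_ ?_
  · simp only [window, ne_eq, List.map_eq_nil_iff, List.range_eq_nil]
    omega
  · simp [window]
  · intro A hA
    obtain ⟨i, _, rfl⟩ := List.mem_map.1 hA
    exact hG _
  · apply List.Pairwise.isChain
    rw [window, List.pairwise_map]
    exact List.pairwise_lt_range.imp fun hij => hmono (by omega)

theorem window_two_zero {α : Type*} (O : ℕ → α) : window 2 O 0 = [O 0] := by
  simp [window]

theorem window_two_succ {α : Type*} (O : ℕ → α) (n : ℕ) :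
    window 2 O (n + 1) = [O n, O (n + 1)] := by
  simp [window, List.range_succ]

/-- The window ending at position `i` of block `n` can be computed from the last two moves. -/
theorem window_block {S : Type u} (Φ₁ Φ₂ : Set S → Set S) {k : ℕ} (O : ℕ → Set S)
    (n : ℕ) {i : ℕ} (hi : i < k) :
    window k (fun m => Φ₂ (expand Φ₁ k (fun j => (window 2 O n).getD j ∅) m))
        (((window 2 O n).length - 1) * k + i)
      = window k (fun m => Φ₂ (expand Φ₁ k O m)) (n * k + i) := by
  have hk : 0 < k := by omega
  cases n with
  | zero =>
    rw [window_two_zero]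
    refine window_congr (by simp) fun j hj => ?_
    have hlt : i + 1 - min (i + 1) k + j < k := by
      simp at hj
      omega
    simp only [List.length_singleton, Nat.sub_self, Nat.zero_mul, zero_add, expand,
      Nat.div_eq_of_lt hlt]
    rfl
  | succ n =>
    rw [window_two_succ]
    have hs : (n + 1) * k = n * k + k := Nat.succ_mul n k
    have hl : ([O n, O (n + 1)].length - 1) * k = k := by simp
    rw [hl, hs]
    have h1 : min (k + i + 1) k = k := by omega
    have h2 : min (n * k + k + i + 1) k = k := by omega
    refine window_congr (by omega) fun j hj => ?_
    rw [h1] at hj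
    rw [h1, h2]
    have a1 : k + i + 1 - k + j = i + 1 + j := by omega
    have a2 : n * k + k + i + 1 - k + j = i + 1 + j + k * n := by
      rw [Nat.mul_comm k n]; omega
    rw [a1, a2]
    simp only [expand, Nat.add_mul_div_left _ _ hk, Nat.add_mul_mod_self_left]
    have hq : (i + 1 + j) / k < 2 := by
      rw [Nat.div_lt_iff_lt_mul hk]; omega
    have hval : [O n, O (n + 1)].getD ((i + 1 + j) / k) ∅ = O ((i + 1 + j) / k + n) := by
      generalize (i + 1 + j) / k = q at hq
      interval_cases q
      · simp
      · simp [Nat.add_comm]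
    rw [hval]

theorem getLastD_window_two {S : Type u} (O : ℕ → Set S) (n : ℕ) :
    (window 2 O n).getLastD ∅ = O n := by
  cases n with
  | zero => rw [window_two_zero]; rfl
  | succ n => rw [window_two_succ]; rfl

/-- Theorem 4.11: let `J` be a free ideal whose σ-completion is proper, and `𝒜` a cofinal
subfamily of `⟨J⟩` such that TWO has a winning `k`-tactic in `MG(𝒜,J)` and there are
functions `Φ₁ : ⟨J⟩ → J` and `Φ₂ : ⟨J⟩ → 𝒜` with `A ⊊ Φ₂ A`, and `Φ₂ A ⊊ Φ₂ B` whenever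
`A ∪ Φ₁ A ⊆ B ∈ ⟨J⟩`. Then TWO has a winning 2-tactic in `SMG(J)`. -/
theorem stmt15 {S : Type u} (J : Set (Set S)) (hJ : IsFreeIdeal J)
    (hproper : Set.univ ∉ sigmaCompletion J)
    (𝒜 : Set (Set S)) (h𝒜sub : 𝒜 ⊆ sigmaCompletion J)
    (h𝒜cof : ∀ X ∈ sigmaCompletion J, ∃ A ∈ 𝒜, X ⊆ A)
    (k : ℕ) (hk : 1 ≤ k)
    (h1 : TwoWinsMG J 𝒜 k)
    (Φ₁ Φ₂ : Set S → Set S)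
    (hΦ₁ : ∀ A ∈ sigmaCompletion J, Φ₁ A ∈ J)
    (hΦ₂ : ∀ A ∈ sigmaCompletion J, Φ₂ A ∈ 𝒜)
    (ha : ∀ A ∈ sigmaCompletion J, A ⊂ Φ₂ A)
    (hb : ∀ A ∈ sigmaCompletion J, ∀ B ∈ sigmaCompletion J, A ∪ Φ₁ A ⊆ B → Φ₂ A ⊂ Φ₂ B) :
    TwoWinsSMG J (sigmaCompletion J) 2 := by
  obtain ⟨Υ, hΥ, hwin⟩ := h1
  refine ⟨pairAnswer J Φ₁ Φ₂ k Υ, ?_, ?_⟩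
  · intro l hl _ hmem _
    refine hJ.union_mem (fill_mem hJ hΦ₁ ?_ k) (hJ.biUnion_mem _ (fun i => ?_) _)
    · rw [List.getLastD_eq_getLast?, List.getLast?_eq_some_getLast hl]
      exact hmem _ (List.getLast_mem hl)
    · dsimp only
      split_ifs with h
      · exact h
      · exact hJ.finite_mem ∅ Set.finite_empty
  · intro O hO hrule
    have hfill : ∀ n, O n ∪ fill Φ₁ (O n) k ⊆ O (n + 1) := fun n => by
      refine (Set.union_subset_union_right _ ?_).trans (hrule n)
      rw [pairAnswer, getLastD_window_two]
      exact Set.subset_union_left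
    have hexp : ∀ m, expand Φ₁ k O m ∈ sigmaCompletion J := fun m =>
      sigmaCompletion_union_mem (hO _) (fill_mem hJ hΦ₁ (hO _) _)
    have hG : ∀ m, Φ₂ (expand Φ₁ k O m) ∈ 𝒜 := fun m => hΦ₂ _ (hexp m)
    have hG' : ∀ m, Φ₂ (expand Φ₁ k O m) ⊂ Φ₂ (expand Φ₁ k O (m + 1)) := fun m =>
      hb _ (hexp m) _ (hexp (m + 1)) (expand_step hk hfill m)
    apply Set.Subset.antisymm
    · have hcover := hwin (fun m => Φ₂ (expand Φ₁ k O m)) hG hG'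
      refine Set.iUnion_subset fun n x hx => ?_
      have hx' : x ∈ Φ₂ (expand Φ₁ k O (n * k)) := by
        refine (ha _ (hexp _)).subset (Or.inl ?_)
        rwa [Nat.mul_div_cancel _ hk]
      obtain ⟨m, hm⟩ := Set.mem_iUnion.1 (hcover (Set.mem_iUnion.2 ⟨n * k, hx'⟩))
      have hi : m % k < k := Nat.mod_lt _ hk
      refine Set.mem_iUnion.2 ⟨m / k, Or.inr (Set.mem_iUnion₂.2
        ⟨m % k, Finset.mem_range.2 hi, ?_⟩)⟩
      have hmk : m / k * k + m % k = m := Nat.div_add_mod' m k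
      dsimp only
      rw [window_block Φ₁ Φ₂ O (m / k) hi, hmk, if_pos (window_legal hk hΥ hG hG' m)]
      exact hm
    · exact Set.iUnion_subset fun n =>
        (Set.subset_union_right.trans (hrule n)).trans (Set.subset_iUnion O (n + 1))
end
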